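/- Let I ⊆ ℚ ∩ [0,∞) be a set satisfying the descending chain condition all of whose accumulation points in ℝ are rational. Then every accumulation point of I₊ in ℝ is rational, and every accumulation point of D(I) in ℝ is rational. -/

import Mathlib

open Filter

/-- A set of reals satisfies the descending chain condition (DCC) if it contains
no infinite strictly decreasing sequence. -/
def DCC (S : Set ℝ) : Prop := ¬ ∃ f : ℕ → ℝ, StrictAnti f ∧ ∀ n, f n ∈ S

/-- A set of reals satisfies the ascending chain condition (ACC) if it contains
no infinite strictly increasing sequence. -/
def ACC (S : Set ℝ) : Prop := ¬ ∃ f : ℕ → ℝ, StrictMono f ∧ ∀ n, f n ∈ S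

/-- `x` is an accumulation point of `S` if every neighborhood of `x` contains a
point of `S` different from `x`. -/
def IsAccPt (x : ℝ) (S : Set ℝ) : Prop := ∀ ε > 0, ∃ y ∈ S, y ≠ x ∧ |y - x| < ε

/-- The set `∂S` of accumulation points of `S` in `ℝ`. -/
def accPts (S : Set ℝ) : Set ℝ := {x | IsAccPt x S}

/-- The set of all (nonempty) finite sums of elements of `I`. -/
def finSums (I : Set ℝ) : Set ℝ :=
  {x | ∃ l : ℕ, 0 < l ∧ ∃ g : Fin l → ℝ, (∀ p, g p ∈ I) ∧ x = ∑ p, g p}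

/-- `I₊ = {0} ∪ { x ∈ [0,1] : x is a nonempty finite sum of elements of I }`. -/
def plusSet (I : Set ℝ) : Set ℝ := {0} ∪ (Set.Icc 0 1 ∩ finSums I)

/-- `D(I) = { a ≤ 1 : a = (m - 1 + f)/m, m ∈ ℕ⁺, f ∈ I₊ }`. -/
def DSet (I : Set ℝ) : Set ℝ :=
  {a | a ≤ 1 ∧ ∃ m : ℕ, 0 < m ∧ ∃ f ∈ plusSet I, a = ((m : ℝ) - 1 + f) / m}

/-- `𝒟_c(I;J) = { a ≤ 1 : a = (m - 1 + f + kc)/m, m ∈ ℕ⁺, f ∈ I₊,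
k a nonzero finite sum of elements of J }`. -/
def DcSet (I J : Set ℝ) (c : ℝ) : Set ℝ :=
  {a | a ≤ 1 ∧ ∃ m : ℕ, 0 < m ∧ ∃ f ∈ plusSet I, ∃ k ∈ finSums J, k ≠ 0 ∧
    a = ((m : ℝ) - 1 + f + k * c) / m}

/-- The closure `S̄ = S ∪ ∂S` of `S` in `ℝ`. -/
def clSet (S : Set ℝ) : Set ℝ := S ∪ accPts S

/-!
A gap `(0, δ)` in `I` bounds the number of nonzero terms of a sum in `[0, 1]` by `δ⁻¹`, so `I₊` lies
in a fixed finite sumset of the compact set `({0} ∪ closure I) ∩ [0, 1]`. As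
`(m - 1 + f) / m = 1 - m⁻¹ * (1 - f)`, the set `D(I)` lies in the continuous image of the compact
set `{0, 1, 1/2, 1/3, …} × closure I₊`. Compact sets are closed, so these two sets contain the
accumulation points as well, and both consist of elements of any subfield containing `closure I`.
-/

theorem accPts_eq_derivedSet (S : Set ℝ) : accPts S = derivedSet S := by
  ext x
  simp only [mem_derivedSet, accPt_iff_frequently, Metric.nhds_basis_ball.frequently_iff,
    accPts, IsAccPt, Set.mem_ofPred_eq, Metric.mem_ball, Real.dist_eq]
  grind

theorem closure_eq_union_accPts (S : Set ℝ) : closure S = S ∪ accPts S := by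
  rw [accPts_eq_derivedSet, closure_eq_self_union_derivedSet]

theorem accPts_subset_closure (S : Set ℝ) : accPts S ⊆ closure S :=
  closure_eq_union_accPts S ▸ Set.subset_union_right

theorem DCC.notMem_accPts_of_subset_Ici {S : Set ℝ} {a : ℝ} (hS : DCC S) (ha : S ⊆ Set.Ici a) :
    a ∉ accPts S := by
  intro hacc
  have hwf : (S \ {a}).IsWF :=
    (Set.isWF_iff_no_descending_seq.2 fun f hf hfS => hS ⟨f, hf, hfS⟩).mono Set.sdiff_subset
  obtain ⟨y, hyS, hya, -⟩ := hacc 1 one_pos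
  have hne : (S \ {a}).Nonempty := ⟨y, hyS, hya⟩
  have hmin : a < hwf.min hne :=
    lt_of_le_of_ne (ha (hwf.min_mem hne).1) (Ne.symm (hwf.min_mem hne).2)
  obtain ⟨z, hzS, hza, hz⟩ := hacc (hwf.min hne - a) (sub_pos.2 hmin)
  exact (hwf.min_le hne ⟨hzS, hza⟩).not_gt (by linarith [le_abs_self (z - a)])

theorem exists_pos_forall_le_of_zero_notMem_accPts {S : Set ℝ} (hS : S ⊆ Set.Ici 0)
    (h0 : 0 ∉ accPts S) : ∃ δ > 0, ∀ x ∈ S, x ≠ 0 → δ ≤ x := by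
  simp only [accPts, IsAccPt, Set.mem_ofPred_eq, sub_zero] at h0
  push Not at h0
  obtain ⟨δ, hδ, hle⟩ := h0
  exact ⟨δ, hδ, fun x hx hx0 => (hle x hx hx0).trans_eq (abs_of_nonneg (hS hx))⟩

section

open scoped Pointwise

theorem isCompact_nsmul {M : Type*} [TopologicalSpace M] [AddMonoid M] [ContinuousAdd M]
    {s : Set M} (hs : IsCompact s) (n : ℕ) : IsCompact (n • s) := by
  induction n with
  | zero => simp
  | succ n ih => exact succ_nsmul s n ▸ ih.add hs

theorem sum_mem_nsmul_of_card_filter_ne_zero_le {ι M : Type*} [AddCommMonoid M] [DecidableEq M]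
    {S : Set M} (h0 : 0 ∈ S) {s : Finset ι} {g : ι → M} (hg : ∀ i ∈ s, g i ∈ S) {n : ℕ}
    (hn : (s.filter (g · ≠ 0)).card ≤ n) : ∑ i ∈ s, g i ∈ n • S := by
  suffices h : ∑ i ∈ s, g i ∈ (s.filter (g · ≠ 0)).card • S from
    Set.nsmul_right_monotone h0 hn h
  rw [← Finset.sum_filter_ne_zero, ← Finset.sum_const]
  exact Set.finsetSum_mem_finsetSum _ _ g fun i hi => hg i (Finset.mem_filter.1 hi).1

theorem card_filter_ne_zero_le_floor {ι k : Type*} [Field k] [LinearOrder k]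
    [IsStrictOrderedRing k] [FloorSemiring k] {s : Finset ι} {g : ι → k} {δ : k} (hδ : 0 < δ)
    (hg : ∀ i ∈ s, g i ≠ 0 → δ ≤ g i) :
    (s.filter (g · ≠ 0)).card ≤ ⌊(∑ i ∈ s, g i) / δ⌋₊ := by
  refine Nat.le_floor ((le_div_iff₀ hδ).2 ?_)
  rw [← nsmul_eq_mul, ← Finset.sum_filter_ne_zero]
  exact Finset.card_nsmul_le_sum _ _ _ fun i hi =>
    hg i (Finset.mem_filter.1 hi).1 (Finset.mem_filter.1 hi).2

theorem plusSet_subset_Icc (I : Set ℝ) : plusSet I ⊆ Set.Icc 0 1 :=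
  Set.union_subset (Set.singleton_subset_iff.2 unitInterval.zero_mem) Set.inter_subset_left

theorem plusSet_subset_nsmul {I : Set ℝ} {δ : ℝ} (hδ : 0 < δ) (hI : ∀ x ∈ I, x ≠ 0 → δ ≤ x) :
    plusSet I ⊆ ⌊δ⁻¹⌋₊ • (insert 0 I ∩ Set.Icc 0 1) := by
  have h0 : (0 : ℝ) ∈ insert 0 I ∩ Set.Icc 0 1 := ⟨Set.mem_insert _ _, unitInterval.zero_mem⟩
  rintro x (rfl | ⟨hx, l, -, g, hg, rfl⟩)
  · exact Set.nsmul_right_monotone h0 (Nat.zero_le _) (by simp)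
  have hg0 (i : Fin l) : 0 ≤ g i := by
    by_cases hi : g i = 0
    · exact hi.ge
    · exact hδ.le.trans (hI _ (hg i) hi)
  have hg1 (i : Fin l) : g i ≤ 1 :=
    (Finset.single_le_sum (fun j _ => hg0 j) (Finset.mem_univ i)).trans hx.2
  refine sum_mem_nsmul_of_card_filter_ne_zero_le h0
    (fun i _ => ⟨Set.mem_insert_of_mem _ (hg i), hg0 i, hg1 i⟩) ?_
  calc _ ≤ ⌊(∑ i, g i) / δ⌋₊ := card_filter_ne_zero_le_floor hδ fun i _ => hI _ (hg i)
    _ ≤ ⌊δ⁻¹⌋₊ := by rw [← one_div]; gcongr; exact hx.2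

theorem closure_plusSet_subset {I : Set ℝ} {δ : ℝ} (hδ : 0 < δ) (hI : ∀ x ∈ I, x ≠ 0 → δ ≤ x)
    {A : AddSubmonoid ℝ} (hA : closure I ⊆ A) : closure (plusSet I) ⊆ A := by
  set C : Set ℝ := insert 0 (closure I) ∩ Set.Icc 0 1
  have hC : IsCompact C := isCompact_Icc.inter_left (isClosed_singleton.union isClosed_closure)
  have hCA : C ⊆ A := Set.inter_subset_left.trans (Set.insert_subset A.zero_mem hA)
  have hsub : plusSet I ⊆ ⌊δ⁻¹⌋₊ • C := (plusSet_subset_nsmul hδ hI).trans <|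
    Set.nsmul_subset_nsmul_left <|
      Set.inter_subset_inter_left _ (Set.insert_subset_insert subset_closure)
  exact (closure_minimal hsub (isCompact_nsmul hC _).isClosed).trans
    (AddSubmonoid.nsmul_subset hCA)

end

theorem DSet_subset_image (I : Set ℝ) :
    DSet I ⊆ (fun p : ℝ × ℝ => 1 - p.1 * (1 - p.2)) ''
      (Set.range (fun m : ℕ => (m : ℝ)⁻¹) ×ˢ plusSet I) := by
  rintro _ ⟨-, m, hm, f, hf, rfl⟩
  refine ⟨((m : ℝ)⁻¹, f), ⟨⟨m, rfl⟩, hf⟩, ?_⟩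
  field_simp
  ring

theorem closure_DSet_subset {I : Set ℝ} {K : Subfield ℝ} (hK : closure (plusSet I) ⊆ K) :
    closure (DSet I) ⊆ K := by
  set R : Set ℝ := insert 0 (Set.range fun m : ℕ => (m : ℝ)⁻¹)
  have hR : IsCompact R := tendsto_inv_atTop_nhds_zero_nat.isCompact_insert_range
  have hF : IsCompact (closure (plusSet I)) :=
    isCompact_Icc.closure_of_subset (plusSet_subset_Icc I)
  have hRK : R ⊆ K := Set.insert_subset K.zero_mem <|
    Set.range_subset_iff.2 fun m => K.inv_mem (natCast_mem K m)
  have hsub := (DSet_subset_image I).trans <|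
    Set.image_mono (Set.prod_mono (Set.subset_insert 0 _) subset_closure)
  refine (closure_minimal hsub ((hR.prod hF).image (by fun_prop)).isClosed).trans ?_
  rintro _ ⟨⟨r, f⟩, ⟨hr, hf⟩, rfl⟩
  exact K.sub_mem K.one_mem (K.mul_mem (hRK hr) (K.sub_mem K.one_mem (hK hf)))

theorem rational_accPts_general (K : Subfield ℝ) {I : Set ℝ} (hI0 : I ⊆ Set.Ici 0)
    (hIK : I ⊆ K) (h0 : 0 ∉ accPts I) (hacc : accPts I ⊆ K) :
    accPts (plusSet I) ⊆ K ∧ accPts (DSet I) ⊆ K := by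
  obtain ⟨δ, hδ, hgap⟩ := exists_pos_forall_le_of_zero_notMem_accPts hI0 h0
  have hcl : closure I ⊆ K := closure_eq_union_accPts I ▸ Set.union_subset hIK hacc
  have hplus : closure (plusSet I) ⊆ K :=
    closure_plusSet_subset (A := K.toAddSubgroup.toAddSubmonoid) hδ hgap hcl
  exact ⟨(accPts_subset_closure _).trans hplus,
    (accPts_subset_closure _).trans (closure_DSet_subset hplus)⟩

theorem mem_fieldRange_algebraMap_rat {F : Type*} [Field F] [CharZero F] {x : F} :
    x ∈ (algebraMap ℚ F).fieldRange ↔ ∃ q : ℚ, x = (q : F) := by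
  simp only [RingHom.mem_fieldRange, eq_ratCast, eq_comm]

/-- Let `I ⊆ ℚ ∩ [0,∞)` satisfy the DCC with all accumulation points in `ℝ`
rational. Then every accumulation point of `I₊` is rational, and every
accumulation point of `D(I)` is rational. -/
theorem rational_accPts (I : Set ℝ) (hI0 : I ⊆ Set.Ici 0)
    (hIQ : ∀ x ∈ I, ∃ q : ℚ, x = (q : ℝ)) (hI : DCC I)
    (hacc : ∀ x, IsAccPt x I → ∃ q : ℚ, x = (q : ℝ)) :
    (∀ x, IsAccPt x (plusSet I) → ∃ q : ℚ, x = (q : ℝ)) ∧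
      (∀ x, IsAccPt x (DSet I) → ∃ q : ℚ, x = (q : ℝ)) := by
  simp only [← mem_fieldRange_algebraMap_rat] at hIQ hacc ⊢
  exact rational_accPts_general _ hI0 hIQ (hI.notMem_accPts_of_subset_Ici hI0) hacc
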